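/- arXiv:1312.2543 — 4 statements merged into one kernel-verified Lean document; each statement's English description precedes it below -/
import Mathlib

section
/- Let p be a prime, M an abelian group, and σ : M → M an automorphism with σ^p = id. Write P(σ) = 1 + σ + σ² + ⋯ + σ^{p−1}. Then p·M ⊆ ker(σ − 1) + ker(P(σ)); in particular the quotient M' = M/(ker(σ−1) + ker(P(σ))) is annihilated by p. If moreover M is torsion-free as an abelian group, then ker(σ − 1) ∩ ker(P(σ)) = 0, so the sum ker(σ−1) + ker(P(σ)) is direct. -/
/-- Let p be a prime, M an abelian group, and σ : M → M an automorphism with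
σ^p = id.  Write P(σ) = 1 + σ + ⋯ + σ^{p−1}.  Then p·M ⊆ ker(σ − 1) + ker(P(σ)); in
particular M' = M/(ker(σ−1) + ker(P(σ))) is annihilated by p.  If moreover M is
torsion-free, then ker(σ − 1) ∩ ker(P(σ)) = 0. -/
theorem stmt_0 (p : ℕ) (hp : p.Prime) (M : Type*) [AddCommGroup M]
    (σ : M ≃ₗ[ℤ] M) (hσ : (σ.toLinearMap) ^ p = 1) :
    (∀ m : M, (p : ℤ) • m ∈
      LinearMap.ker (σ.toLinearMap - 1) ⊔
        LinearMap.ker (∑ i ∈ Finset.range p, σ.toLinearMap ^ i)) ∧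
    (∀ x : M ⧸ (LinearMap.ker (σ.toLinearMap - 1) ⊔
        LinearMap.ker (∑ i ∈ Finset.range p, σ.toLinearMap ^ i)), (p : ℤ) • x = 0) ∧
    (NoZeroSMulDivisors ℤ M →
      LinearMap.ker (σ.toLinearMap - 1) ⊓
        LinearMap.ker (∑ i ∈ Finset.range p, σ.toLinearMap ^ i) = ⊥) := by
  have hfix : ∀ x : M, x ∈ LinearMap.ker (σ.toLinearMap - 1) →
      (∑ i ∈ Finset.range p, σ.toLinearMap ^ i) x = (p : ℤ) • x := by
    intro x hx
    have h1 : σ.toLinearMap x = x := by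
      rw [LinearMap.mem_ker, LinearMap.sub_apply, sub_eq_zero] at hx
      exact hx
    have h2 : ∀ i : ℕ, (σ.toLinearMap ^ i) x = x := by
      intro i
      induction i with
      | zero => rfl
      | succ k ih => rw [pow_succ, Module.End.mul_apply, h1, ih]
    rw [LinearMap.sum_apply, Finset.sum_congr rfl (fun i _ => h2 i)]
    simp
  have hP : ∀ m : M, (∑ i ∈ Finset.range p, σ.toLinearMap ^ i) m ∈
      LinearMap.ker (σ.toLinearMap - 1) := by
    intro m
    rw [LinearMap.mem_ker, ← Module.End.mul_apply, mul_geom_sum, hσ, sub_self,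
      LinearMap.zero_apply]
  have hA : ∀ m : M, (p : ℤ) • m ∈
      LinearMap.ker (σ.toLinearMap - 1) ⊔
        LinearMap.ker (∑ i ∈ Finset.range p, σ.toLinearMap ^ i) := by
    intro m
    refine Submodule.mem_sup.2 ⟨_, hP m,
      (p : ℤ) • m - (∑ i ∈ Finset.range p, σ.toLinearMap ^ i) m, ?_, by abel⟩
    rw [LinearMap.mem_ker, map_sub, hfix _ (hP m), map_smul, sub_self]
  refine ⟨hA, ?_, ?_⟩
  · intro x
    obtain ⟨m, rfl⟩ := Submodule.Quotient.mk_surjective _ x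
    rw [← Submodule.Quotient.mk_smul, Submodule.Quotient.mk_eq_zero]
    exact hA m
  · intro hM
    rw [eq_bot_iff]
    rintro x ⟨h1, h2⟩
    have h3 := hfix x h1
    rw [LinearMap.mem_ker.1 h2] at h3
    rcases hM.eq_zero_or_eq_zero_of_smul_eq_zero h3.symm with h | h
    · exact absurd (by exact_mod_cast h) hp.ne_zero
    · exact h
end

section
/- Let p be a prime and let M be a free module of finite rank r over the integral group ring ℤ[ℤ/pℤ], with σ denoting the action of a fixed generator of ℤ/pℤ. Then the quotient M/(ker(σ − 1) + ker(P(σ))) is a finite group of cardinality p^r, where P(σ) = 1 + σ + ⋯ + σ^{p−1}. -/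
section helpers
open Finset

abbrev GA (p : ℕ) := MonoidAlgebra ℤ (Multiplicative (ZMod p))

noncomputable def gg (p : ℕ) : GA p :=
  MonoidAlgebra.of ℤ (Multiplicative (ZMod p)) (Multiplicative.ofAdd (1 : ZMod p))

noncomputable def augm (p : ℕ) : GA p →ₐ[ℤ] ℤ :=
  MonoidAlgebra.lift ℤ ℤ (Multiplicative (ZMod p)) 1

noncomputable def NN (p : ℕ) : GA p := ∑ i ∈ range p, gg p ^ i

lemma augm_of (p : ℕ) (h) : augm p (MonoidAlgebra.of ℤ _ h) = 1 := by
  simp [augm]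

lemma augm_gg (p : ℕ) : augm p (gg p) = 1 := augm_of p _

lemma augm_NN (p : ℕ) : augm p (NN p) = p := by
  simp [NN, augm_gg]

lemma gg_pow (p : ℕ) (i : ℕ) :
    gg p ^ i = MonoidAlgebra.of ℤ (Multiplicative (ZMod p)) (Multiplicative.ofAdd (i : ZMod p)) := by
  rw [gg, ← map_pow, ← ofAdd_nsmul]; simp

lemma gg_pow_p (p : ℕ) : gg p ^ p = 1 := by
  rw [gg_pow]; simp [MonoidAlgebra.one_def]

lemma gg_mul_NN (p : ℕ) : gg p * NN p = NN p := by
  have h := mul_geom_sum (gg p) p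
  rw [gg_pow_p, sub_self, sub_mul, one_mul, sub_eq_zero] at h
  exact h

lemma gg_pow_mul_NN (p i : ℕ) : gg p ^ i * NN p = NN p := by
  induction i with
  | zero => simp
  | succ k ih => rw [pow_succ, mul_assoc, gg_mul_NN, ih]

lemma mul_NN (p : ℕ) [NeZero p] (x : GA p) : x * NN p = augm p x • NN p := by
  induction x using MonoidAlgebra.induction_on with
  | of h =>
    have : MonoidAlgebra.of ℤ (Multiplicative (ZMod p)) h = gg p ^ (h.toAdd.val) := by
      rw [gg_pow]; simp
    rw [augm_of, one_smul, this, gg_pow_mul_NN]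
  | add f g hf hg => rw [add_mul, hf, hg, map_add, add_smul]
  | smul r f hf => rw [smul_mul_assoc, hf, map_smul, smul_eq_mul, mul_smul]

lemma NN_one (p : ℕ) [NeZero p] : (NN p).coeff 1 = 1 := by
  unfold NN
  rw [MonoidAlgebra.coeff_sum, Finsupp.finset_sum_apply, Finset.sum_eq_single 0]
  · simp [MonoidAlgebra.one_def]
  · intro i hi h0
    rw [gg_pow, MonoidAlgebra.of_apply, MonoidAlgebra.coeff_single, Finsupp.single_apply, if_neg]
    intro h
    have h' : (i : ZMod p) = 0 := h
    rw [ZMod.natCast_eq_zero_iff] at h'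
    exact h0 (Nat.eq_zero_of_dvd_of_lt h' (Finset.mem_range.1 hi))
  · intro h
    simp [NeZero.ne p] at h

lemma dvd_augm (p : ℕ) [NeZero p] (x : GA p) (h : gg p * x = x) : (p : ℤ) ∣ augm p x := by
  have h1 : ∀ i, gg p ^ i * x = x := by
    intro i
    induction i with
    | zero => simp
    | succ k ih => rw [pow_succ, mul_assoc, h, ih]
  have h2 : NN p * x = (p : ℤ) • x := by
    simp [NN, Finset.sum_mul, h1]
  rw [mul_comm, mul_NN] at h2
  refine ⟨x.coeff 1, ?_⟩
  have := congrArg (fun y => MonoidAlgebra.coeff y 1) h2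
  simp only [MonoidAlgebra.coeff_smul_apply, NN_one, smul_eq_mul, mul_one] at this
  exact this

lemma NN_mul_eq_zero (p : ℕ) [NeZero p] (x : GA p) : NN p * x = 0 ↔ augm p x = 0 := by
  rw [mul_comm, mul_NN]
  constructor
  · intro h
    have := congrArg (augm p) h
    rw [map_smul, augm_NN, map_zero, smul_eq_mul] at this
    simpa [NeZero.ne p] using this
  · intro h; rw [h, zero_smul]

end helpers

/-- Let p be a prime and M a free module of finite rank r over the integral
group ring ℤ[ℤ/pℤ], with σ the action of a fixed generator of ℤ/pℤ.  Then
M/(ker(σ−1) + ker(P(σ))) is a finite group of cardinality p^r, where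
P(σ) = 1 + σ + ⋯ + σ^{p−1}. -/
theorem stmt_1 (p : ℕ) (hp : p.Prime) (M : Type*) [AddCommGroup M]
    [Module (MonoidAlgebra ℤ (Multiplicative (ZMod p))) M]
    (r : ℕ) (b : Module.Basis (Fin r) (MonoidAlgebra ℤ (Multiplicative (ZMod p))) M)
    (σ : M →ₗ[ℤ] M)
    (hσ : ∀ m : M, σ m =
      (MonoidAlgebra.of ℤ (Multiplicative (ZMod p)) (Multiplicative.ofAdd (1 : ZMod p))) • m) :
    Nat.card (M ⧸ (LinearMap.ker (σ - 1) ⊔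
      LinearMap.ker (∑ i ∈ Finset.range p, σ ^ i))) = p ^ r := by
  have : NeZero p := ⟨hp.ne_zero⟩
  have hσ' : ∀ m : M, σ m = gg p • m := hσ
  have hpow : ∀ (i : ℕ) (m : M), (σ ^ i) m = gg p ^ i • m := by
    intro i m
    induction i with
    | zero => simp
    | succ k ih => rw [pow_succ', Module.End.mul_apply, ih, hσ', pow_succ', mul_smul]
  have hP : ∀ m : M, (∑ i ∈ Finset.range p, σ ^ i) m = NN p • m := by
    intro m
    rw [LinearMap.sum_apply, NN, Finset.sum_smul]
    exact Finset.sum_congr rfl fun i _ => hpow i m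
  have hkP : ∀ m : M, m ∈ LinearMap.ker (∑ i ∈ Finset.range p, σ ^ i) ↔
      ∀ i, augm p (b.repr m i) = 0 := by
    intro m
    rw [LinearMap.mem_ker, hP, ← b.repr.map_eq_zero_iff, map_smul, Finsupp.ext_iff]
    refine forall_congr' fun i => ?_
    rw [← NN_mul_eq_zero]; rfl
  let φ₀ : M →+ (Fin r → ZMod p) :=
    { toFun := fun m i => ((augm p (b.repr m i) : ℤ) : ZMod p)
      map_zero' := by ext i; simp
      map_add' := by intro x y; ext i; simp }
  let φ : M →ₗ[ℤ] (Fin r → ZMod p) := φ₀.toIntLinearMap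
  have hφ : ∀ m i, φ m i = ((augm p (b.repr m i) : ℤ) : ZMod p) := fun _ _ => rfl
  have hker : LinearMap.ker (σ - 1) ⊔ LinearMap.ker (∑ i ∈ Finset.range p, σ ^ i)
      = LinearMap.ker φ := by
    apply le_antisymm
    · refine sup_le ?_ ?_
      · intro m hm
        rw [LinearMap.mem_ker, LinearMap.sub_apply, Module.End.one_apply, sub_eq_zero, hσ'] at hm
        rw [LinearMap.mem_ker]
        ext i
        rw [hφ, Pi.zero_apply, ZMod.intCast_zmod_eq_zero_iff_dvd]
        apply dvd_augm
        conv_rhs => rw [← hm]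
        rw [map_smul]; rfl
      · intro m hm
        rw [hkP] at hm
        rw [LinearMap.mem_ker]
        ext i
        rw [hφ, hm]; simp
    · intro m hm
      have h1 : ∀ i, ∃ c : ℤ, augm p (b.repr m i) = p * c := by
        intro i
        have := congrFun (LinearMap.mem_ker.1 hm) i
        rw [hφ, Pi.zero_apply, ZMod.intCast_zmod_eq_zero_iff_dvd] at this
        exact this
      choose c hc using h1
      let n : M := NN p • ∑ i, (algebraMap ℤ (GA p) (c i)) • b i
      have hn : ∀ i, b.repr n i = NN p * algebraMap ℤ (GA p) (c i) := by
        intro i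
        have : b.repr n i = NN p * b.repr (∑ i, (algebraMap ℤ (GA p) (c i)) • b i) i := by
          simp only [n]; rw [map_smul]; rfl
        rw [this, b.repr_sum_self]
      rw [← add_sub_cancel n m]
      refine Submodule.add_mem_sup ?_ ?_
      · rw [LinearMap.mem_ker, LinearMap.sub_apply, Module.End.one_apply, sub_eq_zero, hσ']
        simp only [n]
        rw [← mul_smul, gg_mul_NN]
      · rw [hkP]
        intro i
        rw [map_sub, Finsupp.sub_apply, map_sub, hn, hc, map_mul, augm_NN, AlgHom.commutes]
        simp
  have hsurj : Function.Surjective φ := by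
    intro v
    refine ⟨∑ i, (algebraMap ℤ (GA p) ((v i).val : ℤ)) • b i, ?_⟩
    ext i
    rw [hφ, b.repr_sum_self, AlgHom.commutes]
    simp
  rw [hker, Nat.card_congr (φ.quotKerEquivOfSurjective hsurj).toEquiv]
  simp
end

section
/- Let p be a prime and let C and E be bounded cochain complexes of torsion-free abelian groups, each equipped with a chain automorphism σ satisfying σ^p = id, and let f : C → E, g : E → C be σ-commuting chain maps that are mutually inverse up to σ-commuting chain homotopies. Write C' for the quotient complex C/(C^{σ−1} ⊕ C^{P(σ)}) and E' = E/(E^{σ−1} ⊕ E^{P(σ)}). Then the map C' → E' induced by f induces isomorphisms H^i(C') ≅ H^i(E') for every i. -/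
open CategoryTheory CategoryTheory.Limits

namespace Aux5

abbrev Cx := CochainComplex (ModuleCat ℤ) ℤ

noncomputable abbrev J {C : Cx} (a b : C ⟶ C) : kernel a ⊞ kernel b ⟶ C :=
  biprod.desc (kernel.ι a) (kernel.ι b)

lemma ker_lift {C E : Cx} (a : C ⟶ C) (a' : E ⟶ E) (i j : ℤ) (k : C.X i ⟶ E.X j)
    (hk : a.f i ≫ k = k ≫ a'.f j) :
    ∃ k' : (kernel a).X i ⟶ (kernel a').X j,
      (kernel.ι a).f i ≫ k = k' ≫ (kernel.ι a').f j := by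
  let F := HomologicalComplex.eval (ModuleCat ℤ) (ComplexShape.up ℤ) j
  have hlim := isLimitForkMapOfIsLimit' F (kernel.condition a') (kernelIsKernel a')
  have h0 : ((kernel.ι a).f i ≫ k) ≫ F.map a' = 0 := by
    change ((kernel.ι a).f i ≫ k) ≫ a'.f j = 0
    rw [Category.assoc, ← hk, ← Category.assoc, ← HomologicalComplex.comp_f, kernel.condition]
    simp
  obtain ⟨l, hl⟩ := KernelFork.IsLimit.lift' hlim _ h0
  exact ⟨l, hl.symm⟩

instance epi_pi {C : Cx} (a b : C ⟶ C) (i : ℤ) : Epi ((cokernel.π (J a b)).f i) :=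
  inferInstanceAs (Epi ((HomologicalComplex.eval (ModuleCat ℤ) (ComplexShape.up ℤ) i).map
    (cokernel.π (J a b))))

lemma desc0 {C : Cx} (a b : C ⟶ C) (i : ℤ) (Y : ModuleCat ℤ) (m : C.X i ⟶ Y)
    (z1 : (kernel.ι a).f i ≫ m = 0) (z2 : (kernel.ι b).f i ≫ m = 0) :
    ∃ k' : (cokernel (J a b)).X i ⟶ Y, (cokernel.π (J a b)).f i ≫ k' = m := by
  have h0 : (J a b).f i ≫ m = 0 := by
    have hJ : J a b = biprod.fst ≫ kernel.ι a + biprod.snd ≫ kernel.ι b :=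
      biprod.desc_eq
    rw [hJ, HomologicalComplex.add_f_apply, Preadditive.add_comp, HomologicalComplex.comp_f,
      HomologicalComplex.comp_f, Category.assoc, Category.assoc, z1, z2, comp_zero, comp_zero,
      add_zero]
  generalize J a b = q at h0 ⊢
  let F := HomologicalComplex.eval (ModuleCat ℤ) (ComplexShape.up ℤ) i
  have hcol := isColimitCoforkMapOfIsColimit' F (cokernel.condition q)
    (cokernelIsCokernel q)
  obtain ⟨l, hl⟩ := CokernelCofork.IsColimit.desc' hcol m h0
  exact ⟨l, hl⟩

lemma desc1 {C E Q : Cx} (a b : C ⟶ C) (a' b' : E ⟶ E) (π : E ⟶ Q)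
    (e1 : kernel.ι a' ≫ π = 0) (e2 : kernel.ι b' ≫ π = 0) (i j : ℤ) (k : C.X i ⟶ E.X j)
    (ha : a.f i ≫ k = k ≫ a'.f j) (hb : b.f i ≫ k = k ≫ b'.f j) :
    ∃ k' : (cokernel (J a b)).X i ⟶ Q.X j,
      (cokernel.π (J a b)).f i ≫ k' = k ≫ π.f j := by
  obtain ⟨ka, hka⟩ := ker_lift a a' i j k ha
  obtain ⟨kb, hkb⟩ := ker_lift b b' i j k hb
  apply desc0
  · rw [← Category.assoc, hka, Category.assoc, ← HomologicalComplex.comp_f, e1]; simp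
  · rw [← Category.assoc, hkb, Category.assoc, ← HomologicalComplex.comp_f, e2]; simp

lemma desc {C E : Cx} (a b : C ⟶ C) (a' b' : E ⟶ E) (i j : ℤ) (k : C.X i ⟶ E.X j)
    (ha : a.f i ≫ k = k ≫ a'.f j) (hb : b.f i ≫ k = k ≫ b'.f j) :
    ∃ k' : (cokernel (J a b)).X i ⟶ (cokernel (J a' b')).X j,
      (cokernel.π (J a b)).f i ≫ k' = k ≫ (cokernel.π (J a' b')).f j := by
  have e1 : kernel.ι a' ≫ cokernel.π (J a' b') = 0 := by
    have h : biprod.inl ≫ J a' b' = kernel.ι a' := biprod.inl_desc _ _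
    rw [← h, Category.assoc, cokernel.condition, comp_zero]
  have e2 : kernel.ι b' ≫ cokernel.π (J a' b') = 0 := by
    have h : biprod.inr ≫ J a' b' = kernel.ι b' := biprod.inr_desc _ _
    rw [← h, Category.assoc, cokernel.condition, comp_zero]
  exact desc1 a b a' b' _ e1 e2 i j k ha hb

lemma desc_map {C E : Cx} (a b : C ⟶ C) (a' b' : E ⟶ E) (f : C ⟶ E)
    (ha : a ≫ f = f ≫ a') (hb : b ≫ f = f ≫ b') :
    ∃ φ : cokernel (J a b) ⟶ cokernel (J a' b'),
      cokernel.π (J a b) ≫ φ = f ≫ cokernel.π (J a' b') := by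
  refine ⟨cokernel.map _ _ (biprod.map (kernel.map a a' f f ha) (kernel.map b b' f f hb)) f ?_, ?_⟩
  · apply biprod.hom_ext' <;> simp [J]
  · simp

lemma htpy0 {C Q : Cx} (π : C ⟶ Q) (hπ : ∀ i, Epi (π.f i)) (u : C ⟶ C) (h : Homotopy u (𝟙 C))
    (k : ∀ i j, Q.X i ⟶ Q.X j) (hk : ∀ i j, π.f i ≫ k i j = h.hom i j ≫ π.f j)
    (φ : Q ⟶ Q) (hφ : π ≫ φ = u ≫ π) : Nonempty (Homotopy φ (𝟙 _)) := by
  refine ⟨⟨k, ?_, ?_⟩⟩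
  · intro i j hij
    rw [← cancel_epi (π.f i), hk, h.zero i j hij]
    simp
  · intro i
    rw [← cancel_epi (π.f i), ← HomologicalComplex.comp_f, hφ]
    have := h.comm i
    have r1 : (ComplexShape.up ℤ).Rel i (i+1) := rfl
    have r2 : (ComplexShape.up ℤ).Rel (i-1) i := by simp
    rw [dNext_eq _ r1, prevD_eq _ r2] at this ⊢
    rw [HomologicalComplex.comp_f, this]
    simp only [Preadditive.add_comp, Preadditive.comp_add, Category.assoc, ← hk,
      HomologicalComplex.Hom.comm_assoc, HomologicalComplex.id_f, Category.id_comp,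
      Category.comp_id]
    rw [reassoc_of% (hk i (i-1)), HomologicalComplex.Hom.comm]

lemma htpy {C : Cx} (a b : C ⟶ C) (u : C ⟶ C) (h : Homotopy u (𝟙 C))
    (ha : ∀ i j, a.f i ≫ h.hom i j = h.hom i j ≫ a.f j)
    (hb : ∀ i j, b.f i ≫ h.hom i j = h.hom i j ≫ b.f j)
    (φ : cokernel (J a b) ⟶ cokernel (J a b))
    (hφ : cokernel.π (J a b) ≫ φ = u ≫ cokernel.π (J a b)) :
    Nonempty (Homotopy φ (𝟙 _)) := by
  choose k hk using fun i j => desc a b a b i j (h.hom i j) (ha i j) (hb i j)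
  exact htpy0 _ (epi_pi a b) u h k hk φ hφ

lemma pow_comm_f {C E : Cx} (s : End C) (t : End E) (i j : ℤ) (k : C.X i ⟶ E.X j)
    (h : (s : C ⟶ C).f i ≫ k = k ≫ (t : E ⟶ E).f j) (n : ℕ) :
    ((s ^ n : End C) : C ⟶ C).f i ≫ k = k ≫ ((t ^ n : End E) : E ⟶ E).f j := by
  induction n with
  | zero =>
    rw [pow_zero, pow_zero]
    change (𝟙 C : C ⟶ C).f i ≫ k = k ≫ (𝟙 E : E ⟶ E).f j
    simp
  | succ n ih =>
    rw [pow_succ, pow_succ]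
    change ((s : C ⟶ C) ≫ (s ^ n : End C)).f i ≫ k = k ≫ ((t : E ⟶ E) ≫ (t ^ n : End E)).f j
    rw [HomologicalComplex.comp_f, HomologicalComplex.comp_f, Category.assoc, ih,
      reassoc_of% h]

lemma sum_comm_f {C E : Cx} (s : End C) (t : End E) (i j : ℤ) (k : C.X i ⟶ E.X j)
    (h : (s : C ⟶ C).f i ≫ k = k ≫ (t : E ⟶ E).f j) (n : ℕ) :
    ((∑ m ∈ Finset.range n, s ^ m : End C) : C ⟶ C).f i ≫ k =
      k ≫ ((∑ m ∈ Finset.range n, t ^ m : End E) : E ⟶ E).f j := by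
  induction n with
  | zero =>
    rw [Finset.sum_range_zero, Finset.sum_range_zero]
    change (0 : C ⟶ C).f i ≫ k = k ≫ (0 : E ⟶ E).f j
    simp
  | succ n ih =>
    rw [Finset.sum_range_succ, Finset.sum_range_succ]
    refine (Preadditive.add_comp _ _ _ _ _ _).trans
      (Eq.trans ?_ (Preadditive.comp_add _ _ _ _ _ _).symm)
    exact congrArg₂ (· + ·) ih (pow_comm_f s t i j k h n)

lemma sub_comm_f {C E : Cx} (s : End C) (t : End E) (i j : ℤ) (k : C.X i ⟶ E.X j)
    (h : (s : C ⟶ C).f i ≫ k = k ≫ (t : E ⟶ E).f j) :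
    ((s - 1 : End C) : C ⟶ C).f i ≫ k = k ≫ ((t - 1 : End E) : E ⟶ E).f j := by
  refine (Preadditive.sub_comp _ _ _).trans
    (Eq.trans ?_ (Preadditive.comp_sub _ _ _).symm)
  refine congrArg₂ (· - ·) h ?_
  exact (Category.id_comp k).trans (Category.comp_id k).symm

lemma fin {C E Q R : Cx} (π : C ⟶ Q) (ρ : E ⟶ R) (f : C ⟶ E) (g : E ⟶ C)
    (φ : Q ⟶ R) (ψ : R ⟶ Q) (hφ : π ≫ φ = f ≫ ρ) (hψ : ρ ≫ ψ = g ≫ π)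
    (H1 : π ≫ (φ ≫ ψ) = (f ≫ g) ≫ π → Nonempty (Homotopy (φ ≫ ψ) (𝟙 _)))
    (H2 : ρ ≫ (ψ ≫ φ) = (g ≫ f) ≫ ρ → Nonempty (Homotopy (ψ ≫ φ) (𝟙 _))) (i : ℤ) :
    IsIso ((HomologicalComplex.homologyFunctor (ModuleCat ℤ) (ComplexShape.up ℤ) i).map φ) := by
  obtain ⟨H1⟩ := H1 (by rw [reassoc_of% hφ, hψ, Category.assoc])
  obtain ⟨H2⟩ := H2 (by rw [reassoc_of% hψ, hφ, Category.assoc])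
  refine ⟨(HomologicalComplex.homologyFunctor (ModuleCat ℤ)
    (ComplexShape.up ℤ) i).map ψ, ?_, ?_⟩
  · rw [← Functor.map_comp, ← CategoryTheory.Functor.map_id]
    exact H1.homologyMap_eq i
  · rw [← Functor.map_comp, ← CategoryTheory.Functor.map_id]
    exact H2.homologyMap_eq i

lemma main {C E : Cx} (a b : C ⟶ C) (a' b' : E ⟶ E) (f : C ⟶ E) (g : E ⟶ C)
    (h1 : Homotopy (f ≫ g) (𝟙 C)) (h2 : Homotopy (g ≫ f) (𝟙 E))
    (fa : ∀ i, a.f i ≫ f.f i = f.f i ≫ a'.f i) (fb : ∀ i, b.f i ≫ f.f i = f.f i ≫ b'.f i)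
    (ga : ∀ i, a'.f i ≫ g.f i = g.f i ≫ a.f i) (gb : ∀ i, b'.f i ≫ g.f i = g.f i ≫ b.f i)
    (ha : ∀ i j, a.f i ≫ h1.hom i j = h1.hom i j ≫ a.f j)
    (hb : ∀ i j, b.f i ≫ h1.hom i j = h1.hom i j ≫ b.f j)
    (ha' : ∀ i j, a'.f i ≫ h2.hom i j = h2.hom i j ≫ a'.f j)
    (hb' : ∀ i j, b'.f i ≫ h2.hom i j = h2.hom i j ≫ b'.f j) :
    ∃ φ : cokernel (biprod.desc (kernel.ι a) (kernel.ι b)) ⟶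
        cokernel (biprod.desc (kernel.ι a') (kernel.ι b')),
      cokernel.π (biprod.desc (kernel.ι a) (kernel.ι b)) ≫ φ =
        f ≫ cokernel.π (biprod.desc (kernel.ι a') (kernel.ι b')) ∧
      ∀ i : ℤ, IsIso
        ((HomologicalComplex.homologyFunctor (ModuleCat ℤ) (ComplexShape.up ℤ) i).map φ) := by
  obtain ⟨φ, hφ⟩ := desc_map a b a' b' f (by ext1 i; exact fa i) (by ext1 i; exact fb i)
  obtain ⟨ψ, hψ⟩ := desc_map a' b' a b g (by ext1 i; exact ga i) (by ext1 i; exact gb i)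
  exact ⟨φ, hφ, fin _ _ f g φ ψ hφ hψ (htpy a b _ h1 ha hb _) (htpy a' b' _ h2 ha' hb' _)⟩

end Aux5

/-- Let p be a prime and C, E bounded cochain complexes of torsion-free abelian
groups with chain automorphisms σ satisfying σ^p = id, and f : C → E, g : E → C σ-commuting
chain maps, mutually inverse up to σ-commuting chain homotopies.  Write
C' = C/(C^{σ−1} ⊕ C^{P(σ)}) and E' = E/(E^{σ−1} ⊕ E^{P(σ)}).  Then the map C' → E' induced
by f induces isomorphisms H^i(C') ≅ H^i(E') for every i. -/
theorem stmt_5 (p : ℕ) (hp : p.Prime)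
    (C E : CochainComplex (ModuleCat ℤ) ℤ)
    (hCbd : ∃ N : ℕ, ∀ i : ℤ, (N : ℤ) ≤ |i| → IsZero (C.X i))
    (hEbd : ∃ N : ℕ, ∀ i : ℤ, (N : ℤ) ≤ |i| → IsZero (E.X i))
    (hCtf : ∀ i : ℤ, NoZeroSMulDivisors ℤ (C.X i))
    (hEtf : ∀ i : ℤ, NoZeroSMulDivisors ℤ (E.X i))
    (σC : End C) (σE : End E) (hσC : σC ^ p = 1) (hσE : σE ^ p = 1)
    (f : C ⟶ E) (g : E ⟶ C)
    (hfσ : f ≫ σE = σC ≫ f) (hgσ : g ≫ σC = σE ≫ g)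
    (hgf : ∃ h : Homotopy (f ≫ g) (𝟙 C),
      ∀ i j : ℤ, (σC : C ⟶ C).f i ≫ h.hom i j = h.hom i j ≫ (σC : C ⟶ C).f j)
    (hfg : ∃ h : Homotopy (g ≫ f) (𝟙 E),
      ∀ i j : ℤ, (σE : E ⟶ E).f i ≫ h.hom i j = h.hom i j ≫ (σE : E ⟶ E).f j) :
    ∃ φ : cokernel (biprod.desc (kernel.ι (σC - 1))
            (kernel.ι (∑ k ∈ Finset.range p, σC ^ k))) ⟶
          cokernel (biprod.desc (kernel.ι (σE - 1))
            (kernel.ι (∑ k ∈ Finset.range p, σE ^ k))),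
      cokernel.π (biprod.desc (kernel.ι (σC - 1))
          (kernel.ι (∑ k ∈ Finset.range p, σC ^ k))) ≫ φ =
        f ≫ cokernel.π (biprod.desc (kernel.ι (σE - 1))
          (kernel.ι (∑ k ∈ Finset.range p, σE ^ k))) ∧
      ∀ i : ℤ, IsIso
        ((HomologicalComplex.homologyFunctor (ModuleCat ℤ) (ComplexShape.up ℤ) i).map φ) := by
  obtain ⟨h1, hh1⟩ := hgf
  obtain ⟨h2, hh2⟩ := hfg
  have cf : ∀ i, (σC : C ⟶ C).f i ≫ f.f i = f.f i ≫ (σE : E ⟶ E).f i := fun i =>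
    (congrArg (fun x : C ⟶ E => x.f i) hfσ).symm
  have cg : ∀ i, (σE : E ⟶ E).f i ≫ g.f i = g.f i ≫ (σC : C ⟶ C).f i := fun i =>
    (congrArg (fun x : E ⟶ C => x.f i) hgσ).symm
  exact Aux5.main _ _ _ _ f g h1 h2
    (fun i => Aux5.sub_comm_f σC σE i i _ (cf i))
    (fun i => Aux5.sum_comm_f σC σE i i _ (cf i) p)
    (fun i => Aux5.sub_comm_f σE σC i i _ (cg i))
    (fun i => Aux5.sum_comm_f σE σC i i _ (cg i) p)
    (fun i j => Aux5.sub_comm_f σC σC i j _ (hh1 i j))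
    (fun i j => Aux5.sum_comm_f σC σC i j _ (hh1 i j) p)
    (fun i j => Aux5.sub_comm_f σE σE i j _ (hh2 i j))
    (fun i j => Aux5.sum_comm_f σE σE i j _ (hh2 i j) p)
end

section
/- Let A be a finitely generated free abelian group with an automorphism σ satisfying σ² = id, and let σ̄ denote the induced automorphism of A ⊗ 𝔽₂. Then there is an isomorphism of abelian groups A/(ker(σ−1) ⊕ ker(σ+1)) ≅ (A ⊗ 𝔽₂)/( ker(σ̄ − 1) + im(σ̄ − 1) ); equivalently, A/(ker(σ−1) ⊕ ker(σ+1)) is isomorphic to the σ̄-coinvariants of (A ⊗ 𝔽₂)/ker(σ̄ − 1). -/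
open TensorProduct

lemma aux_surj (A : Type*) [AddCommGroup A] (t : ZMod 2 ⊗[ℤ] A) :
    ∃ a : A, (1 : ZMod 2) ⊗ₜ[ℤ] a = t := by
  induction t with
  | zero => exact ⟨0, by simp⟩
  | tmul c a =>
    obtain ⟨n, rfl⟩ := ZMod.intCast_surjective c
    refine ⟨n • a, ?_⟩
    rw [← TensorProduct.smul_tmul]
    simp
  | add x y hx hy =>
    obtain ⟨a, rfl⟩ := hx
    obtain ⟨b, rfl⟩ := hy
    exact ⟨a + b, TensorProduct.tmul_add _ _ _⟩

lemma aux_two (A : Type*) [AddCommGroup A] (b : A) :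
    (1 : ZMod 2) ⊗ₜ[ℤ] ((2 : ℤ) • b) = 0 := by
  rw [← TensorProduct.smul_tmul]
  have : (2 : ℤ) • (1 : ZMod 2) = 0 := by decide
  rw [this, TensorProduct.zero_tmul]

lemma aux_ker (A : Type*) [AddCommGroup A] (a : A)
    (h : (1 : ZMod 2) ⊗ₜ[ℤ] a = 0) : ∃ b : A, a = (2 : ℤ) • b := by
  let f : ℤ →ₗ[ℤ] ℤ := LinearMap.lsmul ℤ ℤ 2
  let g : ℤ →ₗ[ℤ] ZMod 2 := (Int.castAddHom (ZMod 2)).toIntLinearMap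
  have hex : Function.Exact f g := by
    intro n
    constructor
    · intro hn
      have hn' : ((n : ℤ) : ZMod 2) = 0 := hn
      obtain ⟨k, hk⟩ := (ZMod.intCast_zmod_eq_zero_iff_dvd n 2).1 hn'
      exact ⟨k, by simp [f, hk]⟩
    · rintro ⟨k, rfl⟩
      change (((2 : ℤ) * k : ℤ) : ZMod 2) = 0
      exact (ZMod.intCast_zmod_eq_zero_iff_dvd _ 2).2 ⟨k, rfl⟩
  have hg : Function.Surjective g := ZMod.intCast_surjective
  have := rTensor_exact A hex hg
  obtain ⟨y, hy⟩ := (this ((1 : ℤ) ⊗ₜ[ℤ] a)).1 (by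
    rw [LinearMap.rTensor_tmul]
    have : g 1 = 1 := by simp [g]
    rw [this, h])
  refine ⟨TensorProduct.lid ℤ A y, ?_⟩
  have h2 : LinearMap.rTensor A f y = (2 : ℤ) • y := by
    clear hy
    induction y with
    | zero => simp
    | tmul c a => simp [f, TensorProduct.smul_tmul']
    | add x y hx hy => simp_all
  rw [h2] at hy
  have := congrArg (TensorProduct.lid ℤ A) hy
  simpa using this.symm

/-- Let A be a finitely generated free abelian group with an automorphism σ
satisfying σ² = id, and let σ̄ be the induced automorphism of A ⊗ 𝔽₂.  Then
A/(ker(σ−1) ⊕ ker(σ+1)) ≅ (A ⊗ 𝔽₂)/(ker(σ̄−1) + im(σ̄−1)) as abelian groups, i.e.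
A/(ker(σ−1) ⊕ ker(σ+1)) is isomorphic to the σ̄-coinvariants of (A ⊗ 𝔽₂)/ker(σ̄−1). -/
theorem stmt_9 (A : Type*) [AddCommGroup A] [Module.Free ℤ A] [Module.Finite ℤ A]
    (σ : A ≃ₗ[ℤ] A) (hσ : σ.toLinearMap ^ 2 = 1) :
    Nonempty
      ((A ⧸ (LinearMap.ker (σ.toLinearMap - 1) ⊔ LinearMap.ker (σ.toLinearMap + 1))) ≃+
        ((ZMod 2 ⊗[ℤ] A) ⧸
          (LinearMap.ker (σ.toLinearMap.baseChange (ZMod 2) - 1) ⊔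
            LinearMap.range (σ.toLinearMap.baseChange (ZMod 2) - 1)))) := by
  have hs : ∀ a, σ (σ a) = a := fun a => by
    have := LinearMap.congr_fun hσ a
    simpa [pow_two] using this
  set S := (LinearMap.ker (σ.toLinearMap.baseChange (ZMod 2) - 1) ⊔
            LinearMap.range (σ.toLinearMap.baseChange (ZMod 2) - 1)) with hS
  have hbar : ∀ a : A, (σ.toLinearMap.baseChange (ZMod 2) - 1) ((1 : ZMod 2) ⊗ₜ[ℤ] a)
      = (1 : ZMod 2) ⊗ₜ[ℤ] (σ a - a) := fun a => by
    simp [TensorProduct.tmul_sub]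
  let f : A →ₗ[ℤ] ((ZMod 2 ⊗[ℤ] A) ⧸ S) :=
    (S.mkQ.toAddMonoidHom.comp
      (TensorProduct.mk ℤ (ZMod 2) A 1).toAddMonoidHom).toIntLinearMap
  have hf : ∀ a, f a = S.mkQ ((1 : ZMod 2) ⊗ₜ[ℤ] a) := fun a => rfl
  have hsurj : Function.Surjective f := by
    intro q
    obtain ⟨t, rfl⟩ := S.mkQ_surjective q
    obtain ⟨a, rfl⟩ := aux_surj A t
    exact ⟨a, rfl⟩
  have hker : LinearMap.ker f =
      LinearMap.ker (σ.toLinearMap - 1) ⊔ LinearMap.ker (σ.toLinearMap + 1) := by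
    apply le_antisymm
    · intro a ha
      rw [LinearMap.mem_ker, hf, Submodule.mkQ_apply, Submodule.Quotient.mk_eq_zero, hS,
        Submodule.mem_sup] at ha
      obtain ⟨u, hu, v, ⟨w, rfl⟩, huv⟩ := ha
      obtain ⟨x, rfl⟩ := aux_surj A u
      obtain ⟨y, rfl⟩ := aux_surj A w
      rw [LinearMap.mem_ker, hbar] at hu
      obtain ⟨w, hw⟩ := aux_ker A _ hu
      rw [hbar, ← TensorProduct.tmul_add] at huv
      obtain ⟨z, hz⟩ := aux_ker A (a - (x + (σ y - y))) (by
        rw [TensorProduct.tmul_sub, huv, sub_self])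
      have hσx : σ x = x + (2 : ℤ) • w := by rw [← hw]; abel
      have hσw : σ w = - w := by
        have h1 := congrArg σ hσx
        rw [hs, map_add, map_smul, hσx] at h1
        have h2 : (2 : ℤ) • (σ w + w) = 0 := by
          rw [smul_add]
          have h3 := sub_eq_zero.2 h1
          rw [← neg_eq_zero, ← h3]; abel
        have h4 := (smul_eq_zero.1 h2).resolve_left (by norm_num)
        exact eq_neg_of_add_eq_zero_left h4
      rw [Submodule.mem_sup]
      refine ⟨x + w + (z + σ z), ?_, -w + (σ y - y) + (z - σ z), ?_, ?_⟩
      · simp [hs, hσx, hσw]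
        module
      · simp [hs, hσw]
        abel
      · have : a = (2 : ℤ) • z + (x + (σ y - y)) := by rw [← hz]; abel
        rw [this]; module
    · rw [sup_le_iff]
      have key : ∀ a : A, (1 : ZMod 2) ⊗ₜ[ℤ] (σ a - a) = 0 → a ∈ LinearMap.ker f := by
        intro a h
        rw [LinearMap.mem_ker, hf, Submodule.mkQ_apply, Submodule.Quotient.mk_eq_zero, hS]
        apply Submodule.mem_sup_left
        rw [LinearMap.mem_ker, hbar, h]
      constructor
      · intro a ha
        have ha' : σ a - a = 0 := by simpa using ha
        apply key
        rw [ha', TensorProduct.tmul_zero]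
      · intro a ha
        have ha' : σ a + a = 0 := by simpa using ha
        apply key
        have : σ a - a = (2 : ℤ) • (-a) := by
          rw [eq_neg_of_add_eq_zero_left ha']; module
        rw [this, aux_two]
  rw [← hker]
  exact ⟨(f.quotKerEquivOfSurjective hsurj).toAddEquiv⟩
end
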